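/- Let s be a positive integer, let X be an invertible s×s complex matrix, and fix a multigrid hierarchy of levels 0, 1, …, ℓ with dimensions N_0, N_1, …, N_ℓ. For each level i, let C_i be an sN_i×sN_i complex matrix that is monolithic with respect to X with blocks C_{i,1}, …, C_{i,s}, each block being invertible, and for each level i ≥ 1 let W_i be an sN_i×sN_i matrix that is monolithic with respect to X with invertible blocks W_{i,1}, …, W_{i,s}; set the level-i smoother S_i = I − W_i⁻¹ C_i with per-stage blocks S_{i,j} = I − W_{i,j}⁻¹ C_{i,j}. For each i ≥ 1, let P_i be an N_i×N_{i−1} matrix and R_i an N_{i−1}×N_i matrix, with 𝐏_i = I_s ⊗ P_i and 𝐑_i = I_s ⊗ R_i. Fix natural numbers ν_1, ν_2 and γ, and define the multigrid iteration matrices recursively by T_0 = 0 and T_i = S_i^{ν_1} · ( I − 𝐏_i (I − T_{i−1}^γ) C_{i−1}⁻¹ 𝐑_i C_i ) · S_i^{ν_2} for 1 ≤ i ≤ ℓ; define per-stage iteration matrices by T_{0,j} = 0 and T_{i,j} = S_{i,j}^{ν_1} · ( I − P_i (I − T_{i−1,j}^γ) C_{i−1,j}⁻¹ R_i C_{i,j}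 ) · S_{i,j}^{ν_2}. Then for every level i, T_i is monolithic with respect to X with blocks T_{i,1}, …, T_{i,s}: T_i = (X ⊗ I_{N_i}) · blockdiag(T_{i,1}, …, T_{i,s}) · (X⁻¹ ⊗ I_{N_i}). -/

import Mathlib

open Matrix Kronecker

/-- Block-diagonal matrix indexed by `Fin s × Fin N` whose `i`-th diagonal block is `Y i`. -/
def blockDiagFst {m n : ℕ} (Y : Fin m → Matrix (Fin n) (Fin n) ℂ) :
    Matrix (Fin m × Fin n) (Fin m × Fin n) ℂ :=
  Matrix.of fun p q => if p.1 = q.1 then Y p.1 p.2 q.2 else 0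

/-!
Conjugation by `X ⊗ I` turns sums, products and inverses of monolithic matrices into the same
operations performed block by block, and `I ⊗ Q` is monolithic with every block equal to `Q`,
because `I ⊗ Q` intertwines the matrices `X ⊗ I` of the two levels. A multigrid cycle is built from
these operations alone, so it acts stage by stage, and induction on the level applies.
-/

section StageBlockDiagonal

variable {ι m n p α : Type*} [DecidableEq ι]

/-- The rectangular block-diagonal matrix with blocks `B j`, with the block index as the *first*
component of the index pair, as in `1 ⊗ₖ Q`; `Matrix.blockDiagonal` has it as the second. -/
def stageBlockDiagonal [Zero α] (B : ι → Matrix m n α) : Matrix (ι × m) (ι × n) α :=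
  (blockDiagonal B).submatrix Prod.swap Prod.swap

lemma stageBlockDiagonal_zero [Zero α] :
    stageBlockDiagonal (0 : ι → Matrix m n α) = 0 := by
  rw [stageBlockDiagonal, blockDiagonal_zero, submatrix_zero, Pi.zero_apply, Pi.zero_apply]

lemma stageBlockDiagonal_one [DecidableEq n] [Zero α] [One α] :
    stageBlockDiagonal (1 : ι → Matrix n n α) = 1 := by
  rw [stageBlockDiagonal, blockDiagonal_one, submatrix_one _ Prod.swap_injective]

lemma stageBlockDiagonal_sub [AddGroup α] (B D : ι → Matrix m n α) :
    stageBlockDiagonal (B - D) = stageBlockDiagonal B - stageBlockDiagonal D := by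
  rw [stageBlockDiagonal, blockDiagonal_sub, submatrix_sub]
  rfl

lemma stageBlockDiagonal_mul [Fintype ι] [Fintype n] [NonUnitalNonAssocSemiring α]
    (B : ι → Matrix m n α) (D : ι → Matrix n p α) :
    stageBlockDiagonal (fun j => B j * D j) = stageBlockDiagonal B * stageBlockDiagonal D := by
  rw [stageBlockDiagonal, blockDiagonal_mul, submatrix_mul _ _ _ _ _ Prod.swap_bijective]
  rfl

lemma stageBlockDiagonal_const [MulZeroOneClass α] (Q : Matrix m n α) :
    stageBlockDiagonal (fun _ : ι => Q) = (1 : Matrix ι ι α) ⊗ₖ Q :=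
  (one_kronecker Q).symm

lemma stageBlockDiagonal_inv [Fintype ι] [Fintype n] [DecidableEq n] [CommRing α]
    {B : ι → Matrix n n α} (hB : ∀ j, IsUnit (B j).det) :
    (stageBlockDiagonal B)⁻¹ = stageBlockDiagonal fun j => (B j)⁻¹ := by
  refine inv_eq_right_inv ?_
  rw [← stageBlockDiagonal_mul, ← stageBlockDiagonal_one]
  exact congrArg stageBlockDiagonal (funext fun j => mul_nonsing_inv _ (hB j))

end StageBlockDiagonal

section Monolithic

variable {ι m n p α : Type*} [Fintype ι] [DecidableEq ι] [Fintype m] [DecidableEq m]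
  [Fintype n] [DecidableEq n] [Fintype p] [DecidableEq p] [CommRing α] {X : Matrix ι ι α}

/-- `Y` is monolithic with respect to `X`, with blocks `B j`. Rectangular `Y` are allowed, so that
the transfer operators between two levels are covered as well. -/
def IsMonolithic (X : Matrix ι ι α) (Y : Matrix (ι × m) (ι × n) α) (B : ι → Matrix m n α) : Prop :=
  (X⁻¹ ⊗ₖ (1 : Matrix m m α)) * Y * (X ⊗ₖ (1 : Matrix n n α)) = stageBlockDiagonal B

lemma kronecker_one_mul_inv_kronecker_one [Invertible X] :
    (X ⊗ₖ (1 : Matrix n n α)) * (X⁻¹ ⊗ₖ (1 : Matrix n n α)) = 1 := by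
  rw [← mul_kronecker_mul, mul_inv_of_invertible, Matrix.one_mul, one_kronecker_one]

lemma inv_kronecker_one_mul_kronecker_one [Invertible X] :
    (X⁻¹ ⊗ₖ (1 : Matrix n n α)) * (X ⊗ₖ (1 : Matrix n n α)) = 1 := by
  rw [← mul_kronecker_mul, inv_mul_of_invertible, Matrix.one_mul, one_kronecker_one]

namespace IsMonolithic

lemma eq_conj [Invertible X] {Y : Matrix (ι × m) (ι × n) α} {B : ι → Matrix m n α}
    (hY : IsMonolithic X Y B) :
    Y = (X ⊗ₖ (1 : Matrix m m α)) * stageBlockDiagonal B * (X⁻¹ ⊗ₖ (1 : Matrix n n α)) := by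
  rw [← hY, ← Matrix.mul_assoc, ← Matrix.mul_assoc, kronecker_one_mul_inv_kronecker_one,
    Matrix.one_mul, Matrix.mul_assoc, kronecker_one_mul_inv_kronecker_one, Matrix.mul_one]

lemma zero : IsMonolithic X (0 : Matrix (ι × m) (ι × n) α) 0 := by
  rw [IsMonolithic, Matrix.mul_zero, Matrix.zero_mul, stageBlockDiagonal_zero]

lemma one [Invertible X] : IsMonolithic X (1 : Matrix (ι × n) (ι × n) α) 1 := by
  rw [IsMonolithic, Matrix.mul_one, inv_kronecker_one_mul_kronecker_one, stageBlockDiagonal_one]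

lemma one_kronecker [Invertible X] (Q : Matrix m n α) :
    IsMonolithic X ((1 : Matrix ι ι α) ⊗ₖ Q) fun _ => Q := by
  rw [IsMonolithic, stageBlockDiagonal_const, ← mul_kronecker_mul, ← mul_kronecker_mul,
    Matrix.mul_one, inv_mul_of_invertible, Matrix.one_mul, Matrix.mul_one]

lemma sub {Y Z : Matrix (ι × m) (ι × n) α} {B D : ι → Matrix m n α}
    (hY : IsMonolithic X Y B) (hZ : IsMonolithic X Z D) : IsMonolithic X (Y - Z) (B - D) := by
  rw [IsMonolithic, Matrix.mul_sub, Matrix.sub_mul, hY, hZ, stageBlockDiagonal_sub]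

lemma mul [Invertible X] {Y : Matrix (ι × m) (ι × n) α} {Z : Matrix (ι × n) (ι × p) α}
    {B : ι → Matrix m n α} {D : ι → Matrix n p α}
    (hY : IsMonolithic X Y B) (hZ : IsMonolithic X Z D) :
    IsMonolithic X (Y * Z) fun j => B j * D j :=
  calc (X⁻¹ ⊗ₖ (1 : Matrix m m α)) * (Y * Z) * (X ⊗ₖ (1 : Matrix p p α))
    _ = (X⁻¹ ⊗ₖ (1 : Matrix m m α)) * Y *
          ((X ⊗ₖ (1 : Matrix n n α)) * (X⁻¹ ⊗ₖ (1 : Matrix n n α))) *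
          Z * (X ⊗ₖ (1 : Matrix p p α)) := by
      rw [kronecker_one_mul_inv_kronecker_one, Matrix.mul_one, Matrix.mul_assoc _ Y Z]
    _ = ((X⁻¹ ⊗ₖ (1 : Matrix m m α)) * Y * (X ⊗ₖ (1 : Matrix n n α))) *
          ((X⁻¹ ⊗ₖ (1 : Matrix n n α)) * Z * (X ⊗ₖ (1 : Matrix p p α))) := by
      simp only [Matrix.mul_assoc]
    _ = stageBlockDiagonal fun j => B j * D j := by rw [hY, hZ, stageBlockDiagonal_mul]

lemma pow [Invertible X] {Y : Matrix (ι × n) (ι × n) α} {B : ι → Matrix n n α}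
    (hY : IsMonolithic X Y B) (k : ℕ) : IsMonolithic X (Y ^ k) (B ^ k) := by
  induction k with
  | zero => simpa only [pow_zero] using one
  | succ k ih =>
    rw [pow_succ, pow_succ]
    exact ih.mul hY

lemma inv [Invertible X] {Y : Matrix (ι × n) (ι × n) α} {B : ι → Matrix n n α}
    (hY : IsMonolithic X Y B) (hB : ∀ j, IsUnit (B j).det) :
    IsMonolithic X Y⁻¹ fun j => (B j)⁻¹ :=
  calc (X⁻¹ ⊗ₖ (1 : Matrix n n α)) * Y⁻¹ * (X ⊗ₖ (1 : Matrix n n α))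
    _ = ((X⁻¹ ⊗ₖ (1 : Matrix n n α)) * Y * (X ⊗ₖ (1 : Matrix n n α)))⁻¹ := by
      simp only [Matrix.mul_inv_rev, inv_kronecker, inv_inv_of_invertible, inv_one,
        Matrix.mul_assoc]
    _ = stageBlockDiagonal fun j => (B j)⁻¹ := by rw [hY, stageBlockDiagonal_inv hB]

end IsMonolithic

end Monolithic

section Multigrid

variable {ι m n α : Type*} [Fintype m] [DecidableEq m] [Fintype n] [DecidableEq n] [CommRing α]

/-- The error propagation matrix of one multigrid cycle on a fine level with operator `C` and
smoother `S`, transfer operators `P` and `R`, and a coarse level with operator `C₀` on which the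
coarse equation is solved approximately by `γ` cycles with iteration matrix `T₀`. -/
noncomputable def multigridCycle (ν₁ ν₂ γ : ℕ) (S C : Matrix n n α) (P : Matrix n m α)
    (R : Matrix m n α) (C₀ T₀ : Matrix m m α) : Matrix n n α :=
  S ^ ν₁ * (1 - P * (1 - T₀ ^ γ) * C₀⁻¹ * R * C) * S ^ ν₂

lemma IsMonolithic.multigridCycle [Fintype ι] [DecidableEq ι] {X : Matrix ι ι α} [Invertible X]
    (ν₁ ν₂ γ : ℕ) {S C : Matrix (ι × n) (ι × n) α} {P : Matrix (ι × n) (ι × m) α}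
    {R : Matrix (ι × m) (ι × n) α} {C₀ T₀ : Matrix (ι × m) (ι × m) α}
    {Sb Cb : ι → Matrix n n α} {Pb : ι → Matrix n m α} {Rb : ι → Matrix m n α}
    {C₀b T₀b : ι → Matrix m m α}
    (hS : IsMonolithic X S Sb) (hC : IsMonolithic X C Cb) (hP : IsMonolithic X P Pb)
    (hR : IsMonolithic X R Rb) (hC₀ : IsMonolithic X C₀ C₀b) (hC₀b : ∀ j, IsUnit (C₀b j).det)
    (hT₀ : IsMonolithic X T₀ T₀b) :
    IsMonolithic X (multigridCycle ν₁ ν₂ γ S C P R C₀ T₀) fun j =>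
      multigridCycle ν₁ ν₂ γ (Sb j) (Cb j) (Pb j) (Rb j) (C₀b j) (T₀b j) := by
  have hCorrection : IsMonolithic X (P * (1 - T₀ ^ γ) * C₀⁻¹ * R * C)
      (fun j => Pb j * (1 - T₀b j ^ γ) * (C₀b j)⁻¹ * Rb j * Cb j) :=
    (((hP.mul (.sub .one (hT₀.pow γ))).mul (hC₀.inv hC₀b)).mul hR).mul hC
  exact ((hS.pow ν₁).mul (.sub .one hCorrection)).mul (hS.pow ν₂)

end Multigrid

theorem stmt15_general {ι α : Type*} [Fintype ι] [DecidableEq ι] [CommRing α]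
    {X : Matrix ι ι α} (hX : IsUnit X.det) {ℓ : ℕ} {n : ℕ → Type*} [∀ i, Fintype (n i)]
    [∀ i, DecidableEq (n i)]
    {C : (i : ℕ) → Matrix (ι × n i) (ι × n i) α} {Cb : (i : ℕ) → ι → Matrix (n i) (n i) α}
    (hC : ∀ i, i ≤ ℓ → IsMonolithic X (C i) (Cb i))
    (hCb : ∀ i, i < ℓ → ∀ j, IsUnit (Cb i j).det)
    {W : (i : ℕ) → Matrix (ι × n i) (ι × n i) α} {Wb : (i : ℕ) → ι → Matrix (n i) (n i) α}
    (hW : ∀ i, 1 ≤ i → i ≤ ℓ → IsMonolithic X (W i) (Wb i))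
    (hWb : ∀ i, 1 ≤ i → i ≤ ℓ → ∀ j, IsUnit (Wb i j).det)
    {P : (i : ℕ) → Matrix (ι × n (i + 1)) (ι × n i) α}
    {Pb : (i : ℕ) → ι → Matrix (n (i + 1)) (n i) α}
    (hP : ∀ i, i < ℓ → IsMonolithic X (P i) (Pb i))
    {R : (i : ℕ) → Matrix (ι × n i) (ι × n (i + 1)) α}
    {Rb : (i : ℕ) → ι → Matrix (n i) (n (i + 1)) α}
    (hR : ∀ i, i < ℓ → IsMonolithic X (R i) (Rb i))
    {ν₁ ν₂ γ : ℕ}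
    {T : (i : ℕ) → Matrix (ι × n i) (ι × n i) α} {Tb : (i : ℕ) → ι → Matrix (n i) (n i) α}
    (hT₀ : IsMonolithic X (T 0) (Tb 0))
    (hT : ∀ i, i < ℓ → T (i + 1) =
      multigridCycle ν₁ ν₂ γ (1 - (W (i + 1))⁻¹ * C (i + 1)) (C (i + 1)) (P i) (R i) (C i) (T i))
    (hTb : ∀ i, i < ℓ → ∀ j, Tb (i + 1) j =
      multigridCycle ν₁ ν₂ γ (1 - (Wb (i + 1) j)⁻¹ * Cb (i + 1) j) (Cb (i + 1) j) (Pb i j) (Rb i j)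
        (Cb i j) (Tb i j)) :
    ∀ i, i ≤ ℓ → IsMonolithic X (T i) (Tb i) := by
  have := X.invertibleOfIsUnitDet hX
  intro i hi
  induction i with
  | zero => exact hT₀
  | succ i ih =>
    have hSmoother : IsMonolithic X (1 - (W (i + 1))⁻¹ * C (i + 1))
        (fun j => 1 - (Wb (i + 1) j)⁻¹ * Cb (i + 1) j) :=
      .sub .one (((hW _ i.succ_pos hi).inv (hWb _ i.succ_pos hi)).mul (hC _ hi))
    rw [hT i hi, funext (hTb i hi)]
    exact hSmoother.multigridCycle ν₁ ν₂ γ (hC _ hi) (hP i hi) (hR i hi) (hC i (by lia))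
      (hCb i hi) (ih (by lia))

theorem stmt15 (s : ℕ) (hs : 0 < s)
    (X : Matrix (Fin s) (Fin s) ℂ) (hX : IsUnit X.det)
    (ℓ : ℕ) (Nl : ℕ → ℕ) (hNl : ∀ i, i ≤ ℓ → 0 < Nl i)
    -- monolithic level operators with invertible blocks
    (C : (i : ℕ) → Matrix (Fin s × Fin (Nl i)) (Fin s × Fin (Nl i)) ℂ)
    (Cb : (i : ℕ) → Fin s → Matrix (Fin (Nl i)) (Fin (Nl i)) ℂ)
    (hC : ∀ i, i ≤ ℓ →
      (X⁻¹ ⊗ₖ (1 : Matrix (Fin (Nl i)) (Fin (Nl i)) ℂ)) * C i *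
        (X ⊗ₖ (1 : Matrix (Fin (Nl i)) (Fin (Nl i)) ℂ)) = blockDiagFst (Cb i))
    (hCb : ∀ i, i ≤ ℓ → ∀ j, IsUnit ((Cb i j).det))
    -- monolithic preconditioners (smoothers) with invertible blocks, on levels 1,…,ℓ
    (W : (i : ℕ) → Matrix (Fin s × Fin (Nl i)) (Fin s × Fin (Nl i)) ℂ)
    (Wb : (i : ℕ) → Fin s → Matrix (Fin (Nl i)) (Fin (Nl i)) ℂ)
    (hW : ∀ i, 1 ≤ i → i ≤ ℓ →
      (X⁻¹ ⊗ₖ (1 : Matrix (Fin (Nl i)) (Fin (Nl i)) ℂ)) * W i *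
        (X ⊗ₖ (1 : Matrix (Fin (Nl i)) (Fin (Nl i)) ℂ)) = blockDiagFst (Wb i))
    (hWb : ∀ i, 1 ≤ i → i ≤ ℓ → ∀ j, IsUnit ((Wb i j).det))
    -- prolongations and restrictions between consecutive levels
    (P : (i : ℕ) → Matrix (Fin (Nl (i + 1))) (Fin (Nl i)) ℂ)
    (R : (i : ℕ) → Matrix (Fin (Nl i)) (Fin (Nl (i + 1))) ℂ)
    (ν₁ ν₂ γ : ℕ)
    -- the stage-coupled multigrid iteration matrices, with smoother Sᵢ = I − Wᵢ⁻¹ Cᵢ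
    (T : (i : ℕ) → Matrix (Fin s × Fin (Nl i)) (Fin s × Fin (Nl i)) ℂ)
    (hT0 : T 0 = 0)
    (hTrec : ∀ i, i < ℓ →
      T (i + 1) =
        (1 - (W (i + 1))⁻¹ * C (i + 1)) ^ ν₁ *
          (1 - ((1 : Matrix (Fin s) (Fin s) ℂ) ⊗ₖ P i) * (1 - T i ^ γ) * (C i)⁻¹ *
            ((1 : Matrix (Fin s) (Fin s) ℂ) ⊗ₖ R i) * C (i + 1)) *
          (1 - (W (i + 1))⁻¹ * C (i + 1)) ^ ν₂)
    -- the per-stage multigrid iteration matrices, with smoother blocks I − Wᵢⱼ⁻¹ Cᵢⱼ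
    (Tb : (i : ℕ) → Fin s → Matrix (Fin (Nl i)) (Fin (Nl i)) ℂ)
    (hTb0 : ∀ j, Tb 0 j = 0)
    (hTbrec : ∀ i, i < ℓ → ∀ j,
      Tb (i + 1) j =
        (1 - (Wb (i + 1) j)⁻¹ * Cb (i + 1) j) ^ ν₁ *
          (1 - P i * (1 - Tb i j ^ γ) * (Cb i j)⁻¹ * R i * Cb (i + 1) j) *
          (1 - (Wb (i + 1) j)⁻¹ * Cb (i + 1) j) ^ ν₂) :
    ∀ i, i ≤ ℓ →
      T i = (X ⊗ₖ (1 : Matrix (Fin (Nl i)) (Fin (Nl i)) ℂ)) * blockDiagFst (Tb i) *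
        (X⁻¹ ⊗ₖ (1 : Matrix (Fin (Nl i)) (Fin (Nl i)) ℂ)) := by
  have := X.invertibleOfIsUnitDet hX
  have hT₀ : IsMonolithic X (T 0) (Tb 0) := by rw [hT0, funext hTb0]; exact .zero
  exact fun i hi => (stmt15_general hX hC (fun i hi => hCb i hi.le) hW hWb
    (fun i _ => .one_kronecker (P i)) (fun i _ => .one_kronecker (R i)) hT₀ hTrec hTbrec
    i hi).eq_conj
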